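/- A dynamical system (X,T) on a compact metric space is saturated if and only if the variational principle holds for all real Banach spaces: for every real Banach space B, every map Φ : X → B* continuous for the weak-star topology, every α ∈ B* and every E ⊆ B with M_Φ(α;E) ≠ ∅, one has h_top(X_Φ(α;E)) = sup{ h_μ : μ ∈ M_Φ(α;E) }. -/

import Mathlib

open MeasureTheory Filter Topology Set
open scoped ENNReal NNReal

/-!  General definitions: Bowen topological entropy (via covers by Bowen balls),
measure-theoretic (Kolmogorov–Sinai) entropy, generic points, saturated systems,
and the specification property. -/

variable {X : Type*}

/-- The Bowen ball of center `x`, order `n`, radius `ε` (for the metric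
`d_n(x,y) = max_{0 ≤ j < n} d(T^j x, T^j y)`). -/
def bowenBall [PseudoMetricSpace X] (T : X → X) (x : X) (n : ℕ) (ε : ℝ) : Set X :=
  {y | ∀ j < n, dist (T^[j] x) (T^[j] y) < ε}

/-- `H_n^s(Z,ε)`: infimum of `Σ_i exp(-s n_i)` over countable covers of `Z` by Bowen balls
`B_{n_i}(x_i,ε)` with all `n_i ≥ n`. -/
noncomputable def bowenH [PseudoMetricSpace X] (T : X → X) (Z : Set X) (s ε : ℝ) (n : ℕ) :
    ℝ≥0∞ :=
  ⨅ (C : Set (X × ℕ)) (_ : C.Countable) (_ : ∀ p ∈ C, n ≤ p.2)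
    (_ : Z ⊆ ⋃ p ∈ C, bowenBall T p.1 p.2 ε),
    ∑' p : C, ENNReal.ofReal (Real.exp (-s * ((p : X × ℕ).2 : ℝ)))

/-- `h_top(Z,ε)`: the critical exponent of `s ↦ H^s(Z,ε) = sup_n H_n^s(Z,ε)`. -/
noncomputable def bowenEntropyRes [PseudoMetricSpace X] (T : X → X) (Z : Set X) (ε : ℝ) :
    ℝ≥0∞ :=
  sInf ((fun s : ℝ≥0 => (s : ℝ≥0∞)) '' {s : ℝ≥0 | (⨆ n, bowenH T Z (s : ℝ) ε n) = 0})

/-- Bowen topological entropy of a subset `Z`: `h_top(Z) = lim_{ε → 0} h_top(Z,ε)`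
(the limit being a supremum by monotonicity in `ε`). -/
noncomputable def bowenEntropy [PseudoMetricSpace X] (T : X → X) (Z : Set X) : ℝ≥0∞ :=
  ⨆ (ε : ℝ) (_ : 0 < ε), bowenEntropyRes T Z ε

/-- Entropy of the partition `P ∨ T⁻¹P ∨ ⋯ ∨ T⁻⁽ⁿ⁻¹⁾P`, where a countable partition is
encoded as a function `P : X → ℕ`: it is the Shannon entropy of the map
`x ↦ (P x, P (T x), …, P (Tⁿ⁻¹ x))`. -/
noncomputable def partInfo [MeasurableSpace X] (T : X → X) (μ : Measure X) (P : X → ℕ)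
    (n : ℕ) : ℝ≥0∞ :=
  ∑' l : List ℕ, ENNReal.ofReal (Real.negMulLog
    ((μ ((fun x => (List.range n).map fun j => P (T^[j] x)) ⁻¹' {l})).toReal))

/-- Measure-theoretic (Kolmogorov–Sinai) entropy `h_μ(T)`: supremum over finite measurable
partitions `P` of `lim_n (1/n) H_μ(P ∨ T⁻¹P ∨ ⋯ ∨ T⁻⁽ⁿ⁻¹⁾P)` (the limit exists by
subadditivity, so it may be written as a `liminf`). -/
noncomputable def ksEntropy [MeasurableSpace X] (T : X → X) (μ : Measure X) : ℝ≥0∞ :=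
  ⨆ (P : X → ℕ) (_ : Measurable P) (_ : (Set.range P).Finite),
    Filter.atTop.liminf fun n : ℕ => partInfo T μ P n / (n : ℝ≥0∞)

/-- `x` is a generic point for `μ` : the empirical measures `(1/n) Σ_{j<n} δ_{T^j x}`
converge to `μ` in the weak-star topology, i.e. Birkhoff averages of every continuous
function converge to its integral. -/
def IsGeneric [TopologicalSpace X] [MeasurableSpace X] (T : X → X) (μ : Measure X)
    (x : X) : Prop :=
  ∀ f : C(X, ℝ), Tendsto (fun n : ℕ => (∑ j ∈ Finset.range n, f (T^[j] x)) / (n : ℝ))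
    atTop (𝓝 (∫ y, f y ∂μ))

/-- `μ ∈ V(x)` : `μ` is a weak-star limit point of the empirical measures of `x`. -/
def IsLimitMeasure [TopologicalSpace X] [MeasurableSpace X] (T : X → X) (x : X)
    (μ : Measure X) : Prop :=
  ∃ φ : ℕ → ℕ, StrictMono φ ∧ ∀ f : C(X, ℝ),
    Tendsto (fun m : ℕ => (∑ j ∈ Finset.range (φ m), f (T^[j] x)) / (φ m : ℝ))
      atTop (𝓝 (∫ y, f y ∂μ))

/-- A system is saturated if `h_top(G_μ) = h_μ` for every invariant Borel probability
measure `μ`. -/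
def Saturated [PseudoMetricSpace X] [MeasurableSpace X] (T : X → X) : Prop :=
  ∀ μ : Measure X, IsProbabilityMeasure μ → MeasurePreserving T μ μ →
    bowenEntropy T {x | IsGeneric T μ x} = ksEntropy T μ

/-- The specification property. -/
def SpecificationProperty [PseudoMetricSpace X] (T : X → X) : Prop :=
  ∀ ε : ℝ, 0 < ε → ∃ m : ℕ, 1 ≤ m ∧
    ∀ k : ℕ, 2 ≤ k → ∀ x : ℕ → X, ∀ a b : ℕ → ℕ,
      (∀ i < k, a i ≤ b i) →
      (∀ i, i + 1 < k → b i + m ≤ a (i + 1)) →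
      ∃ y : X, ∀ i < k, ∀ n ≤ b i - a i,
        dist (T^[a i + n] y) (T^[n] (x i)) < ε

section CoverEstimates

variable [PseudoMetricSpace X] {T : X → X} {s ε : ℝ} {n : ℕ}

lemma bowenH_mono {Z Z' : Set X} (h : Z ⊆ Z') : bowenH T Z s ε n ≤ bowenH T Z' s ε n := by
  refine le_iInf fun C => le_iInf fun hC => le_iInf fun hn => le_iInf fun hZ => ?_
  exact iInf_le_of_le C <| iInf_le_of_le hC <| iInf_le_of_le hn <| iInf_le _ (h.trans hZ)

lemma bowenEntropy_mono {Z Z' : Set X} (h : Z ⊆ Z') : bowenEntropy T Z ≤ bowenEntropy T Z' := by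
  refine iSup₂_mono fun ε _ => sInf_le_sInf (image_mono fun s hs => ?_)
  exact le_antisymm ((iSup_mono fun n => bowenH_mono h).trans_eq hs) bot_le

/-- A set of zero Bowen sums for all exponents above `t` has entropy at most `t`. -/
lemma bowenEntropy_le_of_bowenH_eq_zero {Z : Set X} {t : ℝ≥0}
    (h : ∀ ε : ℝ, 0 < ε → ∀ s : ℝ≥0, t < s → ∀ n, bowenH T Z s ε n = 0) :
    bowenEntropy T Z ≤ t := by
  refine iSup₂_le fun ε hε => le_of_forall_gt_imp_ge_of_dense fun a ha => ?_
  obtain ⟨s, hts, hsa⟩ := ENNReal.lt_iff_exists_nnreal_btwn.1 ha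
  refine le_trans (sInf_le ⟨s, ?_, rfl⟩) hsa.le
  simpa using h ε hε s (by exact_mod_cast hts)

/-- Bowen sums are bounded using a countable cover by sets of small Bowen diameter. -/
lemma bowenH_le_tsum {ι : Type*} [Countable ι] {Z : Set X} (V : ι → Set X) (ν : ι → ℕ)
    (hν : ∀ i, n ≤ ν i) (hZ : Z ⊆ ⋃ i, V i)
    (hV : ∀ i, ∀ z ∈ V i, V i ⊆ bowenBall T z (ν i) ε) :
    bowenH T Z s ε n ≤ ∑' i, ENNReal.ofReal (Real.exp (-s * (ν i : ℝ))) := by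
  classical
  let J := {i : ι // (V i).Nonempty}
  let g : J → X × ℕ := fun i => (i.2.some, ν i.1)
  calc bowenH T Z s ε n
      ≤ ∑' p : range g, ENNReal.ofReal (Real.exp (-s * ((p : X × ℕ).2 : ℝ))) := by
        refine iInf_le_of_le (range g) <| iInf_le_of_le (countable_range g) <|
          iInf_le_of_le ?_ <| iInf_le _ ?_
        · rintro _ ⟨i, rfl⟩
          exact hν i.1
        · intro z hz
          obtain ⟨i, hi⟩ := mem_iUnion.1 (hZ hz)
          have hne : (V i).Nonempty := ⟨z, hi⟩
          exact mem_biUnion (mem_range_self (⟨i, hne⟩ : J)) (hV i _ hne.some_mem hi)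
    _ ≤ ∑' i : J, ENNReal.ofReal (Real.exp (-s * (ν i.1 : ℝ))) :=
        ENNReal.tsum_le_tsum_comp_of_surjective rangeFactorization_surjective
          (fun p : range g => ENNReal.ofReal (Real.exp (-s * ((p : X × ℕ).2 : ℝ))))
    _ ≤ ∑' i, ENNReal.ofReal (Real.exp (-s * (ν i : ℝ))) :=
        ENNReal.tsum_comp_le_tsum_of_injective Subtype.val_injective
          (fun i : ι => ENNReal.ofReal (Real.exp (-s * (ν i : ℝ))))

lemma bowenH_iUnion_eq_zero {κ : Type*} [Countable κ] {Z : κ → Set X}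
    (h : ∀ i, bowenH T (Z i) s ε n = 0) : bowenH T (⋃ i, Z i) s ε n = 0 := by
  refine le_antisymm (le_of_forall_gt_imp_ge_of_dense fun η hη => ?_) bot_le
  obtain ⟨δ, hδ, hsum⟩ := ENNReal.exists_pos_sum_of_countable' hη.ne' κ
  have hlt : ∀ i, bowenH T (Z i) s ε n < δ i := fun i => (h i).trans_lt (hδ i)
  simp only [bowenH, iInf_lt_iff] at hlt
  choose C hC hn hZ hlt using hlt
  calc bowenH T (⋃ i, Z i) s ε n
      ≤ ∑' p : ⋃ i, C i, ENNReal.ofReal (Real.exp (-s * ((p : X × ℕ).2 : ℝ))) := by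
        refine iInf_le_of_le (⋃ i, C i) <| iInf_le_of_le (countable_iUnion hC) <|
          iInf_le_of_le ?_ <| iInf_le _ ?_
        · intro p hp
          obtain ⟨i, hi⟩ := mem_iUnion.1 hp
          exact hn i p hi
        · refine iUnion_subset fun i => (hZ i).trans ?_
          exact biUnion_subset_biUnion_left (subset_iUnion C i)
    _ ≤ ∑' i, ∑' p : C i, ENNReal.ofReal (Real.exp (-s * ((p : X × ℕ).2 : ℝ))) :=
        ENNReal.tsum_iUnion_le_tsum
          (fun p : X × ℕ => ENNReal.ofReal (Real.exp (-s * (p.2 : ℝ)))) C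
    _ ≤ ∑' i, δ i := ENNReal.tsum_le_tsum fun i => (hlt i).le
    _ ≤ η := hsum.le

end CoverEstimates

section BlockCodes

lemma card_codewords_le {W : Type*} [Fintype W] (L : W → ℕ)
    (hL : ∑ w, Real.exp (-(L w : ℝ)) ≤ 1) (m : ℕ) (A : ℝ) :
    (Nat.card {b : Fin m → W // ∑ i, (L (b i) : ℝ) ≤ A} : ℝ) ≤ Real.exp A := by
  classical
  have h1 : ∑ b : Fin m → W, Real.exp (-∑ i, (L (b i) : ℝ)) ≤ 1 := by
    have h2 : ∑ b : Fin m → W, Real.exp (-∑ i, (L (b i) : ℝ)) =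
        (∑ w, Real.exp (-(L w : ℝ))) ^ m := by
      rw [Finset.sum_pow']
      simp [← Finset.sum_neg_distrib, Real.exp_sum]
    rw [h2]
    exact pow_le_one₀ (Finset.sum_nonneg fun w _ => (Real.exp_pos _).le) hL
  have h3 : ∑ b ∈ Finset.univ.filter (fun b : Fin m → W => ∑ i, (L (b i) : ℝ) ≤ A),
      Real.exp (-A) ≤ 1 := by
    refine le_trans (Finset.sum_le_sum fun b hb => ?_)
      ((Finset.sum_le_univ_sum_of_nonneg fun b => (Real.exp_pos _).le).trans h1)
    have := (Finset.mem_filter.1 hb).2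
    exact Real.exp_le_exp.2 (by linarith)
  rw [Finset.sum_const, nsmul_eq_mul, Real.exp_neg, ← div_eq_mul_inv,
    div_le_one (Real.exp_pos A)] at h3
  rw [Nat.card_eq_fintype_card, Fintype.card_subtype]
  exact h3

lemma sum_range_mul_eq_sum_sum {M : Type*} [AddCommMonoid M] (f : ℕ → M) (m k : ℕ) :
    ∑ j ∈ Finset.range (m * k), f j =
      ∑ r ∈ Finset.range k, ∑ i ∈ Finset.range m, f (r + i * k) := by
  induction m with
  | zero => simp
  | succ m ih =>
    rw [Nat.succ_mul, Finset.sum_range_add, ih]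
    simp only [Finset.sum_range_succ, Finset.sum_add_distrib]
    simp [add_comm]

/-- Points whose orbits can infinitely often be encoded cheaply by a code satisfying Kraft's
inequality on blocks of length `k` have small Bowen entropy at scale `ε`. -/
lemma bowenH_cheaply_coded_eq_zero [PseudoMetricSpace X] {T : X → X} {s ε : ℝ}
    {W : Type*} [Fintype W] (U : W → Set X) {k : ℕ} (hk : 0 < k)
    (hU : ∀ w, ∀ z ∈ U w, ∀ y ∈ U w, ∀ j < k, dist (T^[j] z) (T^[j] y) < ε)
    (L : W → ℕ) (hL : ∑ w, Real.exp (-(L w : ℝ)) ≤ 1)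
    (c : X → ℕ) (hc : ∀ z, ∃ w, z ∈ U w ∧ L w = c z) {τ : ℝ} (hτ : τ < s) (n : ℕ) :
    bowenH T {x | ∃ᶠ m : ℕ in atTop, ∑ j ∈ Finset.range (m * k), (c (T^[j] x) : ℝ) ≤
      k * ((m + 1) * k * τ)} s ε n = 0 := by
  classical
  set Z := {x | ∃ᶠ m : ℕ in atTop, ∑ j ∈ Finset.range (m * k), (c (T^[j] x) : ℝ) ≤
      k * ((m + 1) * k * τ)}
  let g : ℕ → ℝ := fun m =>
    k * Fintype.card W * Real.exp ((m + 1) * k * τ) * Real.exp (-s * (m * k : ℕ))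
  have hg0 : ∀ m, 0 ≤ g m := fun m => by positivity
  have hk' : (0 : ℝ) < k := by exact_mod_cast hk
  have hgsum : Summable g := by
    have h1 : Summable fun m : ℕ => (Real.exp (-((s - τ) * k))) ^ m :=
      summable_geometric_of_lt_one (Real.exp_pos _).le
        (Real.exp_lt_one_iff.2 (neg_lt_zero.2 (mul_pos (sub_pos.2 hτ) hk')))
    refine (h1.mul_left (k * Fintype.card W * Real.exp (k * τ))).congr fun m => ?_
    simp only [g]
    rw [← Real.exp_nat_mul, mul_assoc, mul_assoc, mul_assoc, mul_assoc, ← Real.exp_add,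
      ← Real.exp_add]
    congr 3
    push_cast
    ring
  have hbound : ∀ m₀, n ≤ m₀ → bowenH T Z s ε n ≤ ∑' m, ENNReal.ofReal (g (m + m₀)) := by
    intro m₀ hm₀
    let ι := Σ m : ℕ, Fin k × W ×
      {b : Fin (m + m₀) → W // ∑ i, (L (b i) : ℝ) ≤ ((m + m₀ : ℕ) + 1) * k * τ}
    let V : ι → Set X := fun a =>
      {z | z ∈ U a.2.2.1 ∧ ∀ i : Fin (a.1 + m₀), T^[a.2.1 + i * k] z ∈ U (a.2.2.2.1 i)}
    refine (bowenH_le_tsum V (fun a => (a.1 + m₀) * k) ?_ ?_ ?_).trans ?_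
    · intro a
      calc n ≤ a.1 + m₀ := by omega
        _ ≤ (a.1 + m₀) * k := Nat.le_mul_of_pos_right _ hk
    · intro x hx
      obtain ⟨m, hm, hxm⟩ := (frequently_atTop.1 hx) m₀
      obtain ⟨m, rfl⟩ := Nat.exists_eq_add_of_le' hm
      rw [sum_range_mul_eq_sum_sum] at hxm
      obtain ⟨r, hr, hxr⟩ : ∃ r ∈ Finset.range k,
          ∑ i ∈ Finset.range (m + m₀), (c (T^[r + i * k] x) : ℝ) ≤
            ((m + m₀ : ℕ) + 1) * k * τ := by
        refine Finset.exists_le_of_sum_le (by simpa using hk.ne') (hxm.trans_eq ?_)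
        simp
      obtain ⟨p, hp, -⟩ := hc x
      choose w hw hwc using hc
      refine mem_iUnion.2 ⟨⟨m, ⟨r, Finset.mem_range.1 hr⟩, p,
        fun i => w (T^[r + i * k] x), ?_⟩, hp, fun i => hw _⟩
      simp only [hwc]
      rwa [Fin.sum_univ_eq_sum_range (fun i => (c (T^[r + i * k] x) : ℝ))]
    · rintro ⟨m, r, p, b⟩ z ⟨hzp, hzb⟩ y ⟨hyp, hyb⟩ j hj
      simp only at hj hzb hyb hzp hyp
      by_cases hjr : j < r
      · exact hU p z hzp y hyp j (hjr.trans r.2)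
      · have hi : (j - r) / k < m + m₀ := by
          rw [Nat.div_lt_iff_lt_mul hk]
          omega
        have hq : (j - r) % k < k := Nat.mod_lt _ hk
        have hj' : j = (j - r) % k + (r + (j - r) / k * k) := by
          have := Nat.mod_add_div' (j - r) k
          omega
        have := hU _ _ (hzb ⟨_, hi⟩) _ (hyb ⟨_, hi⟩) _ hq
        simpa only [← Function.iterate_add_apply, ← hj'] using this
    · rw [ENNReal.tsum_sigma']
      refine ENNReal.tsum_le_tsum fun m => ?_
      simp only [tsum_fintype]
      rw [Finset.sum_const, Finset.card_univ, nsmul_eq_mul,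
        Fintype.card_prod, Fintype.card_prod, Fintype.card_fin, ← Nat.card_eq_fintype_card (α :=
          {b : Fin (m + m₀) → W // ∑ i, (L (b i) : ℝ) ≤ ((m + m₀ : ℕ) + 1) * k * τ}),
        ← ENNReal.ofReal_natCast, ← ENNReal.ofReal_mul (Nat.cast_nonneg _)]
      refine ENNReal.ofReal_le_ofReal ?_
      refine mul_le_mul_of_nonneg_right ?_ (Real.exp_pos _).le
      rw [Nat.cast_mul, Nat.cast_mul, ← mul_assoc]
      exact mul_le_mul_of_nonneg_left (card_codewords_le L hL (m + m₀) _) (by positivity)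
  refine le_antisymm ?_ bot_le
  have hlim := ENNReal.tendsto_sum_nat_add (fun m => ENNReal.ofReal (g m)) (by
    rw [← ENNReal.ofReal_tsum_of_nonneg hg0 hgsum]
    exact ENNReal.ofReal_ne_top)
  exact ge_of_tendsto hlim (eventually_atTop.2 ⟨n, hbound⟩)

end BlockCodes

section CodingPoints

/-- A bounded upper semicontinuous `ℕ`-valued function has continuous majorants with almost the
same integral. -/
lemma exists_continuousMap_ge_integral_le [PseudoMetricSpace X] [MeasurableSpace X]
    [BorelSpace X] (μ : Measure X) [IsProbabilityMeasure μ] (c : X → ℕ) {M : ℕ}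
    (hM : ∀ x, c x ≤ M) (hc : ∀ i, IsClosed {x | i ≤ c x}) {η : ℝ} (hη : 0 < η) :
    ∃ g : C(X, ℝ), (∀ x, (c x : ℝ) ≤ g x) ∧ ∫ x, g x ∂μ ≤ ∫ x, (c x : ℝ) ∂μ + η := by
  classical
  let F : ℕ → Set X := fun i => {x | i + 1 ≤ c x}
  let δ : ℕ → ℝ := fun n => 1 / ((n : ℝ) + 1)
  have hδ : ∀ n, 0 < δ n := fun n => Nat.one_div_pos_of_nat
  have hcF : ∀ x, (c x : ℝ) = ∑ i ∈ Finset.range M, (F i).indicator (fun _ => (1 : ℝ)) x := by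
    intro x
    have : (Finset.range M).filter (fun i => x ∈ F i) = Finset.range (c x) := by
      ext i
      have := hM x
      simp only [F, mem_ofPred_eq, Finset.mem_filter, Finset.mem_range]
      omega
    have h : ∀ i, (F i).indicator (fun _ => (1 : ℝ)) x = if x ∈ F i then 1 else 0 :=
      fun i => indicator_apply _ _ _
    simp_rw [h]
    rw [Finset.sum_boole, this, Finset.card_range]
  have hintegral : ∫ x, (c x : ℝ) ∂μ = ∑ i ∈ Finset.range M, μ.real (F i) := by
    simp_rw [hcF]
    rw [integral_finsetSum _ fun i _ =>
      (integrable_const (1 : ℝ)).indicator (hc (i + 1)).measurableSet]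
    exact Finset.sum_congr rfl fun i _ => integral_indicator_one (hc (i + 1)).measurableSet
  let g : ℕ → C(X, ℝ) := fun n =>
    ⟨fun x => ∑ i ∈ Finset.range M, (thickenedIndicator (hδ n) (F i) x : ℝ), by fun_prop⟩
  have hlim : Tendsto (fun n => ∫ x, g n x ∂μ) atTop (𝓝 (∫ x, (c x : ℝ) ∂μ)) := by
    rw [hintegral]
    have hg : ∀ n, ∫ x, g n x ∂μ =
        ∑ i ∈ Finset.range M, ∫ x, (thickenedIndicator (hδ n) (F i) x : ℝ) ∂μ := by
      intro n
      simp only [g, ContinuousMap.coe_mk]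
      exact integral_finsetSum _ fun i _ => integrable_thickenedIndicator (F i) (hδ n)
    simp_rw [hg]
    exact tendsto_finsetSum _ fun i _ => tendsto_integral_thickenedIndicator_of_isClosed μ
      (hc (i + 1)) hδ tendsto_one_div_add_atTop_nhds_zero_nat
  obtain ⟨n, hn⟩ := (hlim.eventually (gt_mem_nhds (lt_add_of_pos_right _ hη))).exists
  refine ⟨g n, fun x => ?_, hn.le⟩
  rw [hcF]
  refine Finset.sum_le_sum fun i _ => ?_
  by_cases hx : x ∈ F i
  · simp [hx, thickenedIndicator_one (hδ n) _ hx]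
  · simp [hx]

lemma frequently_sum_le_of_isLimitMeasure [PseudoMetricSpace X] [MeasurableSpace X]
    [BorelSpace X] {T : X → X} {x : X} {μ : Measure X} [IsProbabilityMeasure μ]
    (hx : IsLimitMeasure T x μ) (c : X → ℕ) {M : ℕ}
    (hM : ∀ x, c x ≤ M) (hc : ∀ i, IsClosed {x | i ≤ c x}) {b : ℝ}
    (hb : ∫ x, (c x : ℝ) ∂μ < b) {k : ℕ} (hk : 0 < k) :
    ∃ᶠ m : ℕ in atTop, ∑ j ∈ Finset.range (m * k), (c (T^[j] x) : ℝ) ≤ (m + 1) * k * b := by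
  obtain ⟨g, hcg, hg⟩ := exists_continuousMap_ge_integral_le μ c hM hc
    (half_pos (sub_pos.2 hb))
  have hb0 : 0 ≤ b := (integral_nonneg fun x => Nat.cast_nonneg _).trans hb.le
  obtain ⟨φ, hφ, hlim⟩ := hx
  have hev := (hlim g).eventually (gt_mem_nhds (show ∫ x, g x ∂μ < b by linarith))
  refine frequently_atTop.2 fun m₀ => ?_
  obtain ⟨i, hi, hφi⟩ := (hev.and (hφ.tendsto_atTop.eventually_ge_atTop (m₀ * k + 1))).exists
  have hφpos : (0 : ℝ) < φ i := by exact_mod_cast (Nat.succ_pos _).trans_le hφi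
  refine ⟨φ i / k, (Nat.le_div_iff_mul_le hk).2 (by omega), ?_⟩
  rw [div_lt_iff₀ hφpos] at hi
  calc ∑ j ∈ Finset.range (φ i / k * k), (c (T^[j] x) : ℝ)
      ≤ ∑ j ∈ Finset.range (φ i), (c (T^[j] x) : ℝ) :=
        Finset.sum_le_sum_of_subset_of_nonneg
          (Finset.range_mono (Nat.div_mul_le_self _ _)) fun _ _ _ => Nat.cast_nonneg _
    _ ≤ ∑ j ∈ Finset.range (φ i), g (T^[j] x) := Finset.sum_le_sum fun j _ => hcg _
    _ ≤ b * φ i := hi.le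
    _ ≤ b * (((φ i / k : ℕ) + 1) * k) := by
        refine mul_le_mul_of_nonneg_left ?_ hb0
        have := (Nat.lt_mul_div_succ (φ i) hk).le
        rw [mul_comm] at this
        exact_mod_cast this
    _ = _ := by ring

/-- Shannon coding: a finite partition has code lengths satisfying Kraft's inequality whose mean
exceeds the entropy of the partition by at most `2`. -/
lemma exists_code_integral_le [MeasurableSpace X] (μ : Measure X) [IsProbabilityMeasure μ]
    {W : Type*} [Fintype W] (a : X → W) (ha : ∀ w, MeasurableSet (a ⁻¹' {w})) :
    ∃ L : W → ℕ, ∑ w, Real.exp (-(L w : ℝ)) ≤ 1 ∧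
      ∫ x, (L (a x) : ℝ) ∂μ ≤ ∑ w, Real.negMulLog (μ (a ⁻¹' {w})).toReal + 2 := by
  classical
  let p : W → ℝ := fun w => (μ (a ⁻¹' {w})).toReal
  let q : W → ℝ := fun w => max (p w) (1 / Fintype.card W)
  have hp0 : ∀ w, 0 ≤ p w := fun w => ENNReal.toReal_nonneg
  have hp1 : ∀ w, p w ≤ 1 := fun w => measureReal_le_one
  have hcard : ∀ _ : W, (1 : ℝ) ≤ Fintype.card W := fun w => by
    exact_mod_cast Fintype.card_pos_iff.2 ⟨w⟩
  have hq0 : ∀ w, 0 < q w := fun w => lt_max_of_lt_right (by have := hcard w; positivity)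
  have hq1 : ∀ w, q w ≤ 1 := fun w =>
    max_le (hp1 w) (div_le_one_of_le₀ (hcard w) (by positivity))
  let : MeasurableSpace W := ⊤
  have : DiscreteMeasurableSpace W := ⟨fun _ => trivial⟩
  have ham : Measurable a := measurable_to_countable' ha
  have hpsum : ∑ w, p w = 1 := by
    have := Measure.isProbabilityMeasure_map (μ := μ) ham.aemeasurable
    have h1 : ∑ w, (μ.map a).real {w} = 1 := by simp
    rw [← h1]
    exact Finset.sum_congr rfl fun w _ => by
      simp only [p, Measure.real, Measure.map_apply ham (measurableSet_singleton w)]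
  refine ⟨fun w => ⌈-Real.log (q w)⌉₊ + 1, ?_, ?_⟩
  · have h1 : ∀ w, Real.exp (-((⌈-Real.log (q w)⌉₊ + 1 : ℕ) : ℝ)) ≤
        Real.exp (-1) * (p w + 1 / Fintype.card W) := fun w => by
      calc Real.exp (-((⌈-Real.log (q w)⌉₊ + 1 : ℕ) : ℝ))
          ≤ Real.exp (-1 + Real.log (q w)) := Real.exp_le_exp.2 (by
            have := Nat.le_ceil (-Real.log (q w))
            push_cast
            linarith)
        _ = Real.exp (-1) * q w := by rw [Real.exp_add, Real.exp_log (hq0 w)]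
        _ ≤ _ := by
            refine mul_le_mul_of_nonneg_left ?_ (Real.exp_pos _).le
            exact max_le_add_of_nonneg (hp0 w) (by positivity)
    refine (Finset.sum_le_sum fun w _ => h1 w).trans ?_
    rw [← Finset.mul_sum, Finset.sum_add_distrib, hpsum, Real.exp_neg]
    have h2 : ∑ _w : W, 1 / (Fintype.card W : ℝ) ≤ 1 := by
      rw [Finset.sum_const, Finset.card_univ, nsmul_eq_mul, mul_one_div]
      exact div_self_le_one _
    have h3 : (2 : ℝ) ≤ Real.exp 1 := by linarith [Real.add_one_le_exp (1 : ℝ)]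
    rw [inv_mul_le_one₀ (Real.exp_pos 1)]
    linarith
  · rw [← integral_map (f := fun w => ((⌈-Real.log (q w)⌉₊ + 1 : ℕ) : ℝ)) ham.aemeasurable
      (Measurable.of_discrete).aestronglyMeasurable, integral_fintype (Integrable.of_finite)]
    calc _ ≤ ∑ w, (Real.negMulLog (p w) + 2 * p w) := by
          refine Finset.sum_le_sum fun w _ => ?_
          have : (μ.map a).real {w} = p w := by
            simp only [p, Measure.real, Measure.map_apply ham (measurableSet_singleton w)]
          rw [this, smul_eq_mul]
          rcases (hp0 w).eq_or_lt with h | h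
          · simp [← h]
          · have h1 := Nat.ceil_lt_add_one (neg_nonneg.2 (Real.log_nonpos (hq0 w).le (hq1 w)))
            have h2 := Real.log_le_log h (le_max_left (p w) (1 / (Fintype.card W : ℝ)))
            have h3 : ((⌈-Real.log (q w)⌉₊ + 1 : ℕ) : ℝ) ≤ -Real.log (p w) + 2 := by
              push_cast
              have h4 : Real.log (p w) ≤ Real.log (q w) := h2
              linarith
            calc _ ≤ p w * (-Real.log (p w) + 2) := mul_le_mul_of_nonneg_left h3 h.le
              _ = _ := by rw [Real.negMulLog]; ring
      _ = _ := by rw [Finset.sum_add_distrib, ← Finset.mul_sum, hpsum]; norm_num [p]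

end CodingPoints

section BowenTheorem

/-- Points whose first `k` iterates are `ρ`-close to the points of `e` spelled by the word `w`. -/
def wordSet [PseudoMetricSpace X] (T : X → X) (e : ℕ → X) (ρ : ℝ) {N k : ℕ}
    (w : Fin k → Fin (N + 1)) : Set X :=
  {z | ∀ j : Fin k, dist (T^[j] z) (e (w j)) < ρ}

/-- The least code length among the words describing a point. -/
noncomputable def codeCost [PseudoMetricSpace X] (T : X → X) (e : ℕ → X) (ρ : ℝ) {N k : ℕ}
    (L : (Fin k → Fin (N + 1)) → ℕ) (z : X) : ℕ :=
  sInf {l | ∃ w, z ∈ wordSet T e ρ w ∧ L w = l}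

section

variable [PseudoMetricSpace X] {T : X → X} {e : ℕ → X} {ρ : ℝ} {N k : ℕ}
  {L : (Fin k → Fin (N + 1)) → ℕ}

lemma isOpen_wordSet (hT : Continuous T) (w : Fin k → Fin (N + 1)) :
    IsOpen (wordSet T e ρ w) := by
  have : wordSet T e ρ w = ⋂ j : Fin k, {z | dist (T^[j] z) (e (w j)) < ρ} := by
    ext z
    simp [wordSet]
  rw [this]
  exact isOpen_iInter_of_finite fun j =>
    isOpen_lt ((hT.iterate j).dist continuous_const) continuous_const

lemma codeCost_le {w : Fin k → Fin (N + 1)} {z : X} (hz : z ∈ wordSet T e ρ w) :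
    codeCost T e ρ L z ≤ L w :=
  Nat.sInf_le ⟨w, hz, rfl⟩

lemma exists_codeCost_eq (he : ∀ z, ∃ i : Fin (N + 1), dist z (e i) < ρ) (z : X) :
    ∃ w, z ∈ wordSet T e ρ w ∧ L w = codeCost T e ρ L z := by
  choose i hi using he
  exact Nat.sInf_mem (s := {l | ∃ w, z ∈ wordSet T e ρ w ∧ L w = l})
    ⟨_, fun j => i (T^[j] z), fun j => hi _, rfl⟩

lemma isClosed_le_codeCost (hT : Continuous T)
    (he : ∀ z, ∃ i : Fin (N + 1), dist z (e i) < ρ) (l : ℕ) :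
    IsClosed {z | l ≤ codeCost T e ρ L z} := by
  have : {z | l ≤ codeCost T e ρ L z}ᶜ = ⋃ w ∈ {w | L w < l}, wordSet T e ρ w := by
    ext z
    simp only [mem_compl_iff, mem_ofPred_eq, not_le, mem_iUnion, exists_prop]
    constructor
    · intro h
      obtain ⟨w, hw, hL⟩ := exists_codeCost_eq (L := L) (T := T) he z
      exact ⟨w, hL ▸ h, hw⟩
    · rintro ⟨w, hw, hz⟩
      exact (codeCost_le hz).trans_lt hw
  rw [← isOpen_compl_iff, this]
  exact isOpen_biUnion fun w _ => isOpen_wordSet hT w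

lemma codeCost_le_sum (he : ∀ z, ∃ i : Fin (N + 1), dist z (e i) < ρ) (z : X) :
    codeCost T e ρ L z ≤ ∑ w, L w := by
  obtain ⟨w, -, hL⟩ := exists_codeCost_eq (L := L) (T := T) he z
  exact hL ▸ Finset.single_le_sum (fun _ _ => Nat.zero_le _) (Finset.mem_univ w)

lemma exists_code_integral_codeCost_lt [MeasurableSpace X] [BorelSpace X]
    (hT : Continuous T) (he : ∀ z, ∃ i : Fin (N + 1), dist z (e i) < ρ)
    (μ : Measure X) [IsProbabilityMeasure μ] {t : ℝ≥0} (ht : ksEntropy T μ ≤ t) {τ : ℝ}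
    (hτ : t < τ) :
    ∃ k, 0 < k ∧ ∃ L : (Fin k → Fin (N + 1)) → ℕ, ∑ w, Real.exp (-(L w : ℝ)) ≤ 1 ∧
      ∫ z, (codeCost T e ρ L z : ℝ) ∂μ < k * τ := by
  let P : X → ℕ := SimpleFunc.nearestPtInd e N
  have hP : Measurable P := (SimpleFunc.nearestPtInd e N).measurable
  have hPN : ∀ z, P z < N + 1 := fun z =>
    Nat.lt_succ_of_le (SimpleFunc.nearestPtInd_le e N z)
  have hPe : ∀ z, dist z (e (P z)) < ρ := fun z => by
    obtain ⟨i, hi⟩ := he z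
    refine lt_of_le_of_lt ?_ hi
    have h := SimpleFunc.edist_nearestPt_le e z (Nat.le_of_lt_succ i.2)
    have h' := ENNReal.toReal_mono (edist_ne_top _ _) h
    rw [← dist_edist, ← dist_edist] at h'
    rw [dist_comm z, dist_comm z]
    exact h'
  have hlim : atTop.liminf (fun n : ℕ => partInfo T μ P n / (n : ℝ≥0∞)) ≤ t :=
    (le_iSup₂_of_le P hP (le_iSup (fun _ : (range P).Finite =>
      atTop.liminf fun n : ℕ => partInfo T μ P n / (n : ℝ≥0∞))
      (SimpleFunc.nearestPtInd e N).finite_range)).trans ht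
  have ht0 : (0 : ℝ) ≤ t := t.2
  have hfreq := frequently_lt_of_liminf_lt (by isBoundedDefault)
    (hlim.trans_lt (show (t : ℝ≥0∞) < ENNReal.ofReal ((t + τ) / 2) by
      rw [← ENNReal.ofReal_coe_nnreal]
      exact (ENNReal.ofReal_lt_ofReal_iff (by linarith)).2 (by linarith)))
  have hev : ∀ᶠ k : ℕ in atTop, 2 / ((τ - t) / 2) < (k : ℝ) :=
    tendsto_natCast_atTop_atTop.eventually_gt_atTop _
  obtain ⟨k, hk, hk2⟩ := (hfreq.and_eventually hev).exists
  have hd : 0 < (τ - t) / 2 := by linarith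
  rw [div_lt_iff₀ hd] at hk2
  have hk0 : 0 < k := Nat.pos_of_ne_zero fun h => by
    rw [h] at hk2
    norm_num at hk2
  let a : X → (Fin k → Fin (N + 1)) := fun z j => ⟨P (T^[j] z), hPN _⟩
  let E : (Fin k → Fin (N + 1)) → List ℕ := fun w => List.ofFn fun j => (w j : ℕ)
  have hE : Function.Injective E := fun w w' h => by
    funext j
    exact Fin.ext (congrFun (List.ofFn_injective h) j)
  have haE : ∀ z, (List.range k).map (fun j => P (T^[j] z)) = E (a z) := fun z =>
    List.ext_getElem (by simp [E]) (by simp [E, a])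
  have hpre : ∀ w, (fun z => (List.range k).map fun j => P (T^[j] z)) ⁻¹' {E w} =
      a ⁻¹' {w} := fun w => by
    ext z
    simp only [mem_preimage, mem_singleton_iff, haE, hE.eq_iff]
  have ham : ∀ w, MeasurableSet (a ⁻¹' {w}) := fun w => by
    have : a ⁻¹' {w} = ⋂ j : Fin k, (fun z => P (T^[j] z)) ⁻¹' {(w j : ℕ)} := by
      ext z
      simp [a, funext_iff, Fin.ext_iff]
    rw [this]
    exact MeasurableSet.iInter fun j =>
      (hP.comp (hT.iterate j).measurable) (measurableSet_singleton _)
  obtain ⟨L, hL, hintegral⟩ := exists_code_integral_le μ a ham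
  refine ⟨k, hk0, L, hL, ?_⟩
  have hent : ∑ w, Real.negMulLog (μ (a ⁻¹' {w})).toReal < k * ((t + τ) / 2) := by
    have h1 : ENNReal.ofReal (∑ w, Real.negMulLog (μ (a ⁻¹' {w})).toReal) ≤ partInfo T μ P k := by
      rw [ENNReal.ofReal_sum_of_nonneg fun w _ =>
        Real.negMulLog_nonneg ENNReal.toReal_nonneg measureReal_le_one, 
        ← tsum_fintype (L := .unconditional _)]
      refine le_trans (le_of_eq ?_) (ENNReal.tsum_comp_le_tsum_of_injective hE _)
      simp only [hpre]
    rw [ENNReal.div_lt_iff (Or.inl (by simpa using hk0.ne')) (Or.inl (by simp)),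
      ← ENNReal.ofReal_natCast, ← ENNReal.ofReal_mul (by linarith)] at hk
    have := (ENNReal.ofReal_lt_ofReal_iff_of_nonneg (Finset.sum_nonneg fun w _ =>
      Real.negMulLog_nonneg ENNReal.toReal_nonneg measureReal_le_one)).1 (h1.trans_lt hk)
    linarith
  have hmeas : Measurable (codeCost T e ρ L) := measurable_of_Ici fun l =>
    (isClosed_le_codeCost hT he l).measurableSet
  have hmono : ∫ z, (codeCost T e ρ L z : ℝ) ∂μ ≤ ∫ z, (L (a z) : ℝ) ∂μ := by
    have hbdd : ∀ w, L w ≤ ∑ w, L w := fun w =>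
      Finset.single_le_sum (fun _ _ => Nat.zero_le _) (Finset.mem_univ w)
    refine integral_mono ?_ ?_ fun z => ?_
    · refine Integrable.of_bound (C := ((∑ w, L w : ℕ) : ℝ))
        (measurable_from_nat.comp hmeas).aestronglyMeasurable (ae_of_all _ fun z => ?_)
      rw [Real.norm_natCast]
      exact_mod_cast codeCost_le_sum he z
    · let _ : MeasurableSpace (Fin k → Fin (N + 1)) := ⊤
      have ham' : Measurable a := measurable_to_countable' ham
      refine Integrable.of_bound (C := ((∑ w, L w : ℕ) : ℝ))
        ((measurable_from_top (f := fun w => (L w : ℝ))).comp ham').aestronglyMeasurable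
        (ae_of_all _ fun z => ?_)
      rw [Real.norm_natCast]
      exact_mod_cast hbdd _
    · exact Nat.cast_le.2 (codeCost_le fun j => hPe _)
  have : (k : ℝ) * τ = k * ((t + τ) / 2) + k * ((τ - t) / 2) := by ring
  linarith

end

/-- Bowen's theorem: the set of points having a limit measure of entropy at most `t` has
topological entropy at most `t`. -/
theorem bowenEntropy_le_of_exists_isLimitMeasure [PseudoMetricSpace X] [CompactSpace X]
    [MeasurableSpace X] [BorelSpace X] {T : X → X} (hT : Continuous T) {Z : Set X} {t : ℝ≥0}
    (hZ : ∀ x ∈ Z, ∃ μ : Measure X, IsProbabilityMeasure μ ∧ IsLimitMeasure T x μ ∧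
      ksEntropy T μ ≤ t) :
    bowenEntropy T Z ≤ t := by
  refine bowenEntropy_le_of_bowenH_eq_zero fun ε hε s hts n => ?_
  have hts' : (t : ℝ) < s := by exact_mod_cast hts
  obtain ⟨τ, htτ, hτs⟩ := exists_between hts'
  rcases isEmpty_or_nonempty X with hX | hX
  · refine le_antisymm ((bowenH_le_tsum (ι := Empty) (fun _ => ∅) (fun _ => 0) nofun
      (fun x => (hX.false x).elim) nofun).trans ?_) bot_le
    simp
  obtain ⟨N, e, he⟩ : ∃ (N : ℕ) (e : ℕ → X), ∀ z, ∃ i : Fin (N + 1), dist z (e i) < ε / 2 := by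
    let e := TopologicalSpace.denseSeq X
    obtain ⟨I, hI⟩ := isCompact_univ.elim_finite_subcover (fun i => Metric.ball (e i) (ε / 2))
      (fun i => Metric.isOpen_ball) fun z _ => by
        obtain ⟨i, hi⟩ := (TopologicalSpace.denseRange_denseSeq X).exists_dist_lt z (half_pos hε)
        exact mem_iUnion.2 ⟨i, hi⟩
    refine ⟨I.sup id, e, fun z => ?_⟩
    obtain ⟨i, hi, hz⟩ := mem_iUnion₂.1 (hI (mem_univ z))
    exact ⟨⟨i, Nat.lt_succ_of_le (Finset.le_sup (f := id) hi)⟩, hz⟩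
  let κ := Σ k : ℕ, {L : (Fin (k + 1) → Fin (N + 1)) → ℕ // ∑ w, Real.exp (-(L w : ℝ)) ≤ 1}
  have hκ := bowenH_iUnion_eq_zero (T := T) (s := s) (ε := ε) (n := n) (κ := κ) fun a =>
    bowenH_cheaply_coded_eq_zero (wordSet T e (ε / 2)) a.1.succ_pos
      (fun w z hz y hy j hj => by
        have h1 := hz ⟨j, hj⟩
        have h2 := hy ⟨j, hj⟩
        calc dist (T^[j] z) (T^[j] y)
            ≤ dist (T^[j] z) (e (w ⟨j, hj⟩)) + dist (T^[j] y) (e (w ⟨j, hj⟩)) :=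
              dist_triangle_right _ _ _
          _ < ε / 2 + ε / 2 := add_lt_add h1 h2
          _ = ε := add_halves ε)
      a.2.1 a.2.2 (codeCost T e (ε / 2) a.2.1) (exists_codeCost_eq he) hτs n
  refine le_antisymm ((bowenH_mono fun x hx => ?_).trans_eq hκ) bot_le
  obtain ⟨μ, hμ, hxμ, hent⟩ := hZ x hx
  obtain ⟨k, hk, L, hL, hintegral⟩ := exists_code_integral_codeCost_lt hT he μ hent htτ
  obtain ⟨k, rfl⟩ := Nat.exists_eq_succ_of_ne_zero hk.ne'
  refine mem_iUnion.2 ⟨⟨k, L, hL⟩, ?_⟩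
  refine (frequently_sum_le_of_isLimitMeasure hxμ _ (codeCost_le_sum he)
    (isClosed_le_codeCost hT he) hintegral hk).mono fun m hm => hm.trans_eq ?_
  simp only [Nat.succ_eq_add_one]
  ring

end BowenTheorem

section LimitMeasures

variable [TopologicalSpace X] [CompactSpace X]

lemma abs_birkhoff_average_le (T : X → X) (x : X) (f : C(X, ℝ)) (n : ℕ) :
    |(∑ j ∈ Finset.range n, f (T^[j] x)) / (n : ℝ)| ≤ ‖f‖ := by
  rw [abs_div, Nat.abs_cast]
  refine div_le_of_le_mul₀ (Nat.cast_nonneg _) (norm_nonneg _) ?_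
  refine (Finset.abs_sum_le_sum_abs _ _).trans ?_
  refine (Finset.sum_le_sum fun j _ => f.norm_coe_le_norm (T^[j] x)).trans_eq ?_
  simp [mul_comm]

lemma IsLimitMeasure.integral_le_limsup [MeasurableSpace X] {T : X → X} {x : X}
    {μ : Measure X} (hμ : IsLimitMeasure T x μ) (f : C(X, ℝ)) :
    ∫ y, f y ∂μ ≤
      limsup (fun n : ℕ => (∑ j ∈ Finset.range n, f (T^[j] x)) / (n : ℝ)) atTop := by
  obtain ⟨φ, hφ, hlim⟩ := hμ
  refine le_of_forall_gt_imp_ge_of_dense fun a ha => ?_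
  have hbdd : IsBoundedUnder (· ≤ ·) atTop
      fun n : ℕ => (∑ j ∈ Finset.range n, f (T^[j] x)) / (n : ℝ) :=
    isBoundedUnder_of ⟨‖f‖, fun n => (abs_le.1 (abs_birkhoff_average_le T x f n)).2⟩
  have hev := hφ.tendsto_atTop.eventually (eventually_lt_of_limsup_lt ha hbdd)
  exact le_of_tendsto (hlim f) (hev.mono fun n hn => hn.le)

end LimitMeasures

/-- Every point of a compact system has an invariant limit measure. -/
lemma exists_isLimitMeasure [MetricSpace X] [CompactSpace X] [MeasurableSpace X] [BorelSpace X]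
    {T : X → X} (hT : Continuous T) (x : X) :
    ∃ μ : Measure X, IsProbabilityMeasure μ ∧ MeasurePreserving T μ μ ∧
      IsLimitMeasure T x μ := by
  let m : ℕ → Measure X := fun n =>
    ((n + 1 : ℕ) : ℝ≥0∞)⁻¹ • ∑ j ∈ Finset.range (n + 1), Measure.dirac (T^[j] x)
  have hm : ∀ n, IsProbabilityMeasure (m n) := fun n => ⟨by
    simp only [m, Measure.smul_apply, Measure.finsetSum_apply, measure_univ, Finset.sum_const,
      Finset.card_range, nsmul_eq_mul, mul_one, smul_eq_mul]
    exact ENNReal.inv_mul_cancel (by simp) (ENNReal.natCast_ne_top _)⟩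
  have hintegral : ∀ n (f : C(X, ℝ)), ∫ y, f y ∂(m n) =
      (∑ j ∈ Finset.range (n + 1), f (T^[j] x)) / ((n + 1 : ℕ) : ℝ) := fun n f => by
    simp only [m]
    rw [integral_smul_measure, integral_finsetSum_measure fun j _ => integrable_dirac (by simp)]
    rw [ENNReal.toReal_inv, ENNReal.toReal_natCast, div_eq_inv_mul]
    simp
  obtain ⟨μ, φ, hφ, hlim⟩ := CompactSpace.tendsto_subseq
    (X := ProbabilityMeasure X) (fun n => ⟨m n, hm n⟩)
  have hlim' : ∀ f : C(X, ℝ), Tendsto (fun i =>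
      (∑ j ∈ Finset.range (φ i + 1), f (T^[j] x)) / ((φ i + 1 : ℕ) : ℝ)) atTop
      (𝓝 (∫ y, f y ∂(μ : Measure X))) := fun f => by
    have h := ProbabilityMeasure.tendsto_iff_forall_integral_tendsto.1 hlim
      (BoundedContinuousFunction.mkOfCompact f)
    refine h.congr fun i => ?_
    exact hintegral (φ i) f
  refine ⟨μ, inferInstance, ⟨hT.measurable, ?_⟩, fun i => φ i + 1, fun i j hij => by
    simpa using hφ hij, hlim'⟩
  have := Measure.isProbabilityMeasure_map (μ := (μ : Measure X)) hT.measurable.aemeasurable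
  refine ext_of_forall_integral_eq_of_IsFiniteMeasure fun f => ?_
  rw [integral_map hT.measurable.aemeasurable f.continuous.aestronglyMeasurable]
  let g : C(X, ℝ) := f.toContinuousMap
  have h1 := (hlim' (g.comp ⟨T, hT⟩)).sub (hlim' g)
  have h2 : Tendsto (fun i => (g (T^[φ i + 1] x) - g x) / ((φ i + 1 : ℕ) : ℝ)) atTop (𝓝 0) := by
    refine squeeze_zero_norm (a := fun i => (2 * ‖g‖) / ((φ i + 1 : ℕ) : ℝ)) (fun i => ?_) ?_
    · rw [norm_div, Real.norm_natCast]
      refine div_le_div_of_nonneg_right ?_ (Nat.cast_nonneg _)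
      refine (norm_sub_le _ _).trans ?_
      linarith [g.norm_coe_le_norm (T^[φ i + 1] x), g.norm_coe_le_norm x]
    · exact tendsto_const_nhds.div_atTop (tendsto_natCast_atTop_atTop.comp
        ((tendsto_add_atTop_nat 1).comp hφ.tendsto_atTop))
  have h3 := tendsto_nhds_unique (h1.congr fun i => ?_) h2
  · exact sub_eq_zero.1 h3
  · rw [← sub_div]
    congr 1
    refine Eq.trans ?_ (Finset.sum_range_sub (fun j => g (T^[j] x)) (φ i + 1))
    rw [← Finset.sum_sub_distrib]
    exact Finset.sum_congr rfl fun j _ => by simp [Function.iterate_succ_apply']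

/-- If the upper limits of the averages of `f` and `-f` are at most the integrals, then the
averages of `f` converge to the integral. -/
lemma isGeneric_of_limsup_le [TopologicalSpace X] [CompactSpace X] [MeasurableSpace X]
    {T : X → X} {μ : Measure X} {x : X}
    (h : ∀ f : C(X, ℝ), limsup (fun n : ℕ => (∑ j ∈ Finset.range n, f (T^[j] x)) / (n : ℝ))
      atTop ≤ ∫ y, f y ∂μ) : IsGeneric T μ x := by
  have hev : ∀ (f : C(X, ℝ)) (a : ℝ), ∫ y, f y ∂μ < a →
      ∀ᶠ n : ℕ in atTop, (∑ j ∈ Finset.range n, f (T^[j] x)) / (n : ℝ) < a := fun f a ha =>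
    eventually_lt_of_limsup_lt ((h f).trans_lt ha)
      (isBoundedUnder_of ⟨‖f‖, fun n => (abs_le.1 (abs_birkhoff_average_le T x f n)).2⟩)
  intro f
  refine tendsto_order.2 ⟨fun a ha => ?_, fun a ha => hev f a ha⟩
  refine (hev (-f) (-a) (by simpa [integral_neg] using ha)).mono fun n hn => ?_
  simpa [neg_div] using hn

lemma weakDual_average_apply {B : Type*} [NormedAddCommGroup B] [NormedSpace ℝ B]
    (S : ℕ → WeakDual ℝ B) (n : ℕ) (w : B) :
    (((n : ℝ)⁻¹ • ∑ j ∈ Finset.range n, S j) : WeakDual ℝ B) w =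
      (∑ j ∈ Finset.range n, S j w) / n := by
  let ev : WeakDual ℝ B →+ ℝ :=
    { toFun := fun S => S w, map_zero' := rfl, map_add' := fun _ _ => rfl }
  rw [div_eq_inv_mul]
  exact congrArg ((n : ℝ)⁻¹ * ·) (map_sum ev S _)

/-- **Theorem 4.2.** A compact dynamical system is saturated if and only if the variational
principle holds for all real Banach spaces `B`: whenever `Φ : X → B*` is weak-star
continuous, `α ∈ B*`, `E ⊆ B` and `M_Φ(α;E) ≠ ∅`, one has
`h_top(X_Φ(α;E)) = sup { h_μ : μ ∈ M_Φ(α;E) }`. -/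
theorem saturated_iff_variational_principle {X : Type*} [MetricSpace X] [CompactSpace X]
    [MeasurableSpace X] [BorelSpace X] (T : X → X) (hT : Continuous T) :
    Saturated T ↔
      ∀ (B : Type) (_ : NormedAddCommGroup B), ∀ (_ : NormedSpace ℝ B) (_ : CompleteSpace B)
        (Φ : X → WeakDual ℝ B), Continuous Φ →
        ∀ (α : WeakDual ℝ B) (E : Set B),
          {μ : Measure X | IsProbabilityMeasure μ ∧ MeasurePreserving T μ μ ∧
            ∀ w ∈ E, (∫ x, Φ x w ∂μ) ≤ α w}.Nonempty →
          bowenEntropy T {x : X | ∀ w ∈ E,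
              Filter.limsup (fun n : ℕ =>
                (((n : ℝ)⁻¹ • ∑ j ∈ Finset.range n, Φ (T^[j] x)) : WeakDual ℝ B) w)
                Filter.atTop ≤ α w} =
            ⨆ μ ∈ {μ : Measure X | IsProbabilityMeasure μ ∧ MeasurePreserving T μ μ ∧
              ∀ w ∈ E, (∫ x, Φ x w ∂μ) ≤ α w}, ksEntropy T μ := by
  constructor
  · intro hsat B _ _ _ Φ hΦ α E _
    let F : B → C(X, ℝ) := fun w => ⟨fun x => Φ x w, (WeakDual.eval_continuous w).comp hΦ⟩
    simp_rw [weakDual_average_apply]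
    refine le_antisymm ?_ (iSup₂_le fun μ hμ => ?_)
    · set M := {μ : Measure X | IsProbabilityMeasure μ ∧ MeasurePreserving T μ μ ∧
        ∀ w ∈ E, (∫ x, Φ x w ∂μ) ≤ α w}
      generalize ht : (⨆ μ ∈ M, ksEntropy T μ) = t
      rcases eq_or_ne t ⊤ with rfl | htop
      · exact le_top
      lift t to ℝ≥0 using htop
      refine bowenEntropy_le_of_exists_isLimitMeasure hT fun x hx => ?_
      obtain ⟨μ, hμ, hμT, hxμ⟩ := exists_isLimitMeasure hT x
      have hμM : μ ∈ M :=
        ⟨hμ, hμT, fun w hw => (hxμ.integral_le_limsup (F w)).trans (hx w hw)⟩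
      exact ⟨μ, hμ, hxμ,
        (le_iSup₂ (f := fun (μ : Measure X) (_ : μ ∈ M) => ksEntropy T μ) μ hμM).trans_eq ht⟩
    · obtain ⟨hμ, hμT, hμE⟩ := hμ
      rw [← hsat μ hμ hμT]
      exact bowenEntropy_mono fun x hx w hw => (hx (F w)).limsup_eq.trans_le (hμE w hw)
  · intro hvp μ hμ hμT
    obtain ⟨ι, hι⟩ := TopologicalSpace.exists_embedding_l_infty X
    have : CompactSpace (range ι) := isCompact_iff_compactSpace.1 (isCompact_range hι.continuous)
    let h : X ≃ₜ range ι := hι.toHomeomorph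
    let Φ : X → WeakDual ℝ C(range ι, ℝ) := fun x =>
      StrongDual.toWeakDual (ContinuousMap.evalCLM ℝ (h x))
    have hΦ : Continuous Φ := WeakDual.continuous_of_continuous_eval fun w =>
      w.continuous.comp h.continuous
    have hintegral : ∀ w : C(range ι, ℝ), Integrable (fun x => w (h x)) μ := fun w =>
      (w.continuous.comp h.continuous).integrable_of_hasCompactSupport
        (HasCompactSupport.of_compactSpace _)
    let α₀ : C(range ι, ℝ) →ₗ[ℝ] ℝ :=
      { toFun := fun w => ∫ x, w (h x) ∂μ
        map_add' := fun v w => integral_add (hintegral v) (hintegral w)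
        map_smul' := fun a w => integral_const_mul a _ }
    let α : WeakDual ℝ C(range ι, ℝ) := StrongDual.toWeakDual (α₀.mkContinuous 1 fun w => by
      refine (norm_integral_le_of_norm_le_const
        (ae_of_all _ fun x => w.norm_coe_le_norm (h x))).trans_eq ?_
      simp)
    have hα : ∀ w, α w = ∫ x, w (h x) ∂μ := fun w => rfl
    have hpull : ∀ f : C(X, ℝ), ∃ w : C(range ι, ℝ), ∀ x, w (h x) = f x := fun f =>
      ⟨f.comp ⟨h.symm, h.symm.continuous⟩, fun x => by simp⟩
    have hM : {ν : Measure X | IsProbabilityMeasure ν ∧ MeasurePreserving T ν ν ∧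
        ∀ w ∈ (univ : Set C(range ι, ℝ)), (∫ x, Φ x w ∂ν) ≤ α w} = {μ} := by
      refine Subset.antisymm ?_ (singleton_subset_iff.2 ⟨hμ, hμT, fun w _ => le_rfl⟩)
      rintro ν ⟨hν, -, hνα⟩
      have hle : ∀ w : C(range ι, ℝ), ∫ x, w (h x) ∂ν ≤ ∫ x, w (h x) ∂μ := fun w =>
        hνα w (mem_univ w)
      refine ext_of_forall_integral_eq_of_IsFiniteMeasure fun f => ?_
      obtain ⟨w, hw⟩ := hpull f.toContinuousMap
      have h1 := hle w
      have h2 := hle (-w)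
      simp only [ContinuousMap.neg_apply, integral_neg, neg_le_neg_iff] at h2
      have h3 := le_antisymm h1 h2
      simpa only [hw] using! h3
    have key := hvp C(range ι, ℝ) inferInstance inferInstance inferInstance Φ hΦ α univ
      (hM ▸ singleton_nonempty μ)
    rw [hM, iSup_singleton] at key
    rw [← key]
    congr 1
    simp_rw [weakDual_average_apply, hα]
    ext x
    constructor
    · intro hx w _
      exact (hx (w.comp ⟨h, h.continuous⟩)).limsup_eq.le
    · refine fun hx => isGeneric_of_limsup_le fun f => ?_
      obtain ⟨w, hw⟩ := hpull f
      have h1 := hx w (mem_univ w)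
      simp only [hw] at h1
      refine le_trans (le_of_eq ?_) h1
      congr! 4
      exact (hw _).symm
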